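/- arXiv:2412.07775 — 2 statements merged into one kernel-verified Lean document; each statement's English description precedes it below -/
import Mathlib

section
/- Let E = ℝ^d, T ≥ 1, and Z > 0. For t = 0, …, T−1 let P_F^t, P_B^t : E × E → ℝ be strictly positive transition densities with ∫_E P_B^t(x | y) dx = 1 for every y ∈ E, let F_t : E → ℝ (t = 0, …, T) be strictly positive, and let P_0(x) = F_0(x)/Z be the initial probability density. Suppose the detailed balance condition F_t(x) · P_F^t(y | x) = P_B^t(x | y) · F_{t+1}(y) holds for all t and all x, y ∈ E. Then, assuming all iterated integrals below exist and are finite, the marginal density P_F(x_T) := ∫ … ∫ P_0(x_0) ∏_{t=0}^{T−1} P_F^t(x_{t+1} | x_t) dx_0 ⋯ dx_{T−1} equals F_T(x_T)/Z for every x_T ∈ E. -/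
/-!
Detailed balance, multiplied along a trajectory `(x₀, …, x_{T-1}, z)`, telescopes:
`F₀(x₀) ∏ₜ P_F^t(x_{t+1}|x_t) = (∏ₜ P_B^t(x_t|x_{t+1})) F_T(z)` (`telescope`). Hence the integrand
of the marginal is the density of the backward chain started at `z`, times the constant
`F_T(z) / Z`. The backward chain has total mass one (`lintegral_backward_prod`): by Tonelli, its
coordinates can be integrated out in the order `x₀, …, x_{T-1}`, each integral being one by
normalization of the backward policy. Working with lower Lebesgue integrals here makes
integrability considerations unnecessary.
-/

open MeasureTheory

/-- The marginal density of the terminal sample `z` of a Markovian sampler with initial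
density `P0` and transition densities `P t x y` (density of going from `x` to `y` at step
`t`): the iterated integral `∫…∫ P0(x₀) ∏ₜ P_t(x_{t+1}|x_t) dx₀⋯dx_{T-1}`, written as a
single integral over the trajectory `(x₀,…,x_{T-1})` with `x_T = z`. -/
noncomputable def forwardMarginal {d T : ℕ}
    (P0 : EuclideanSpace ℝ (Fin d) → ℝ)
    (P : Fin T → EuclideanSpace ℝ (Fin d) → EuclideanSpace ℝ (Fin d) → ℝ)
    (z : EuclideanSpace ℝ (Fin d)) : ℝ :=
  ∫ x : Fin T → EuclideanSpace ℝ (Fin d),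
    P0 (Fin.snoc (α := fun _ => EuclideanSpace ℝ (Fin d)) x z 0) *
      ∏ t : Fin T, P t (Fin.snoc (α := fun _ => EuclideanSpace ℝ (Fin d)) x z t.castSucc)
        (Fin.snoc (α := fun _ => EuclideanSpace ℝ (Fin d)) x z t.succ)

theorem telescope {E : Type*} {T : ℕ} (PF PB : Fin T → E → E → ℝ) (F : Fin (T + 1) → E → ℝ)
    (hDB : ∀ (t : Fin T) (x y : E), F t.castSucc x * PF t x y = PB t y x * F t.succ y)
    (u : Fin (T + 1) → E) :
    F 0 (u 0) * ∏ t : Fin T, PF t (u t.castSucc) (u t.succ) =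
      (∏ t : Fin T, PB t (u t.succ) (u t.castSucc)) * F (Fin.last T) (u (Fin.last T)) := by
  induction T with
  | zero => simp
  | succ n ih =>
    have h := ih (fun t => PF t.castSucc) (fun t => PB t.castSucc) (fun t => F t.castSucc)
      (fun t x y => hDB t.castSucc x y) (fun t => u t.castSucc)
    simp only [Fin.castSucc_zero] at h
    rw [Fin.prod_univ_castSucc, Fin.prod_univ_castSucc, ← mul_assoc]
    simp only [Fin.succ_castSucc, Fin.succ_last]
    rw [h, mul_assoc, hDB, Fin.succ_last, mul_assoc]

theorem measurable_snoc_apply {E : Type*} [MeasurableSpace E] {T : ℕ} (i : Fin (T + 1)) :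
    Measurable (fun p : E × (Fin T → E) => Fin.snoc (α := fun _ => E) p.2 p.1 i) := by
  induction i using Fin.lastCases with
  | last => simpa using measurable_fst
  | cast j => simpa [Function.comp_def] using (measurable_pi_apply j).comp measurable_snd

/-- A Markov chain run backwards from `z` with normalized transition densities `K t` has a
trajectory density of total mass one. -/
theorem lintegral_backward_prod {E : Type*} [MeasureSpace E] [SigmaFinite (volume : Measure E)]
    {T : ℕ} (K : Fin T → E → E → ENNReal) (hK : ∀ t, Measurable (Function.uncurry (K t)))
    (hK1 : ∀ t y, ∫⁻ x, K t y x = 1) (z : E) :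
    ∫⁻ x : Fin T → E, ∏ t : Fin T, K t (Fin.snoc (α := fun _ => E) x z t.succ) (x t) = 1 := by
  induction T generalizing z with
  | zero => simp [lintegral_unique, volume_pi]
  | succ n ih =>
    have hmp := (volume_preserving_piFinSuccAbove (fun _ : Fin (n + 1) => E) (Fin.last n)).symm
    -- The last coordinate `p.1` is the first state reached from `z`; the remaining ones form a
    -- backward chain started at `p.1`.
    have hsplit : ∀ p : E × (Fin n → E),
        (∏ t : Fin (n + 1), K t (Fin.snoc (α := fun _ => E)
          ((MeasurableEquiv.piFinSuccAbove (fun _ => E) (Fin.last n)).symm p) z t.succ)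
          ((MeasurableEquiv.piFinSuccAbove (fun _ => E) (Fin.last n)).symm p t)) =
        K (Fin.last n) z p.1 * ∏ t : Fin n,
          K t.castSucc (Fin.snoc (α := fun _ => E) p.2 p.1 t.succ) (p.2 t) := by
      intro p
      have he : (MeasurableEquiv.piFinSuccAbove (fun _ => E) (Fin.last n)).symm p =
          Fin.snoc (α := fun _ => E) p.2 p.1 := Fin.insertNth_last' _ _
      rw [he, Fin.prod_univ_castSucc, mul_comm]
      simp only [Fin.succ_castSucc, Fin.succ_last, Fin.snoc_castSucc, Fin.snoc_last]
    have hmeas : Measurable (fun p : E × (Fin n → E) =>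
        K (Fin.last n) z p.1 * ∏ t : Fin n,
          K t.castSucc (Fin.snoc (α := fun _ => E) p.2 p.1 t.succ) (p.2 t)) := by
      refine ((hK _).comp (measurable_const.prodMk measurable_fst)).mul
        (Finset.measurable_fun_prod _ fun t _ => ?_)
      exact (hK t.castSucc).comp ((measurable_snoc_apply t.succ).prodMk
        ((measurable_pi_apply t).comp measurable_snd))
    rw [← hmp.lintegral_comp_emb (MeasurableEquiv.measurableEmbedding _)]
    simp_rw [hsplit]
    rw [Measure.volume_eq_prod, lintegral_prod _ hmeas.aemeasurable]
    have hinner : ∀ w : E, ∫⁻ x : Fin n → E, K (Fin.last n) z w * ∏ t : Fin n,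
        K t.castSucc (Fin.snoc (α := fun _ => E) x w t.succ) (x t) = K (Fin.last n) z w := by
      intro w
      rw [lintegral_const_mul, ih _ (fun t => hK t.castSucc) (fun t => hK1 t.castSucc), mul_one]
      refine Finset.measurable_fun_prod _ fun t _ => ?_
      exact (hK t.castSucc).comp (((measurable_snoc_apply t.succ).comp
        measurable_prodMk_left).prodMk (measurable_pi_apply t))
    simp_rw [hinner]
    exact hK1 _ z

/-- Detailed balance with a normalized backward policy implies that the
marginal of the forward policy equals the normalized terminal flow `F_T / Z`.
Conventions: `PF t x y = P_F^t(y|x)`, `PB t y x = P_B^t(x|y)`. -/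
theorem detailed_balance_marginal_eq_terminal_flow {d T : ℕ} (hT : 1 ≤ T)
    (Z : ℝ) (hZ : 0 < Z)
    (PF PB : Fin T → EuclideanSpace ℝ (Fin d) → EuclideanSpace ℝ (Fin d) → ℝ)
    (F : Fin (T + 1) → EuclideanSpace ℝ (Fin d) → ℝ)
    (P0 : EuclideanSpace ℝ (Fin d) → ℝ)
    (hPFpos : ∀ t x y, 0 < PF t x y) (hPBpos : ∀ t y x, 0 < PB t y x)
    (hFpos : ∀ t x, 0 < F t x)
    (hPFmeas : ∀ t, Measurable (Function.uncurry (PF t)))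
    (hPBmeas : ∀ t, Measurable (Function.uncurry (PB t)))
    (hP0meas : Measurable P0)
    (hPBnorm : ∀ t y, ∫ x, PB t y x = 1)
    (hP0 : ∀ x, P0 x = F 0 x / Z)
    (hDB : ∀ (t : Fin T) (x y : EuclideanSpace ℝ (Fin d)),
      F t.castSucc x * PF t x y = PB t y x * F t.succ y)
    (hInt : ∀ z : EuclideanSpace ℝ (Fin d),
      Integrable (fun x : Fin T → EuclideanSpace ℝ (Fin d) =>
        P0 (Fin.snoc (α := fun _ => EuclideanSpace ℝ (Fin d)) x z 0) *
          ∏ t : Fin T, PF t (Fin.snoc (α := fun _ => EuclideanSpace ℝ (Fin d)) x z t.castSucc)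
            (Fin.snoc (α := fun _ => EuclideanSpace ℝ (Fin d)) x z t.succ))) :
    ∀ z, forwardMarginal P0 PF z = F (Fin.last T) z / Z := by
  intro z
  have hpt : ∀ x : Fin T → EuclideanSpace ℝ (Fin d),
      P0 (Fin.snoc (α := fun _ => EuclideanSpace ℝ (Fin d)) x z 0) *
        ∏ t : Fin T, PF t (Fin.snoc (α := fun _ => EuclideanSpace ℝ (Fin d)) x z t.castSucc)
          (Fin.snoc (α := fun _ => EuclideanSpace ℝ (Fin d)) x z t.succ) =
      (∏ t : Fin T, PB t (Fin.snoc (α := fun _ => EuclideanSpace ℝ (Fin d)) x z t.succ) (x t)) *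
        (F (Fin.last T) z / Z) := by
    intro x
    have h := telescope PF PB F hDB (Fin.snoc (α := fun _ => EuclideanSpace ℝ (Fin d)) x z)
    rw [hP0, div_mul_eq_mul_div, h]
    simp only [Fin.snoc_castSucc, Fin.snoc_last]
    ring
  have hone : ∫ x : Fin T → EuclideanSpace ℝ (Fin d),
      ∏ t : Fin T, PB t (Fin.snoc (α := fun _ => EuclideanSpace ℝ (Fin d)) x z t.succ) (x t)
        = 1 := by
    rw [integral_eq_lintegral_of_nonneg_ae
      (Filter.Eventually.of_forall fun x => Finset.prod_nonneg fun t _ => (hPBpos _ _ _).le)]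
    · simp_rw [ENNReal.ofReal_prod_of_nonneg fun t _ => (hPBpos t _ _).le]
      rw [lintegral_backward_prod (fun t y x => ENNReal.ofReal (PB t y x))
        (fun t => (hPBmeas t).ennreal_ofReal), ENNReal.toReal_one]
      intro t y
      -- The Bochner integral of `PB t y` being nonzero, `PB t y` is integrable.
      have hi : Integrable (PB t y) := by
        by_contra hn
        have := hPBnorm t y
        rw [integral_undef hn] at this
        exact zero_ne_one this
      rw [← ofReal_integral_eq_lintegral_ofReal hi
        (Filter.Eventually.of_forall fun x => (hPBpos t y x).le), hPBnorm, ENNReal.ofReal_one]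
    · refine (Finset.measurable_fun_prod _ fun t _ => ?_).aestronglyMeasurable
      exact (hPBmeas t).comp (((measurable_snoc_apply t.succ).comp
        measurable_prodMk_left).prodMk (measurable_pi_apply t))
  unfold forwardMarginal
  simp_rw [hpt]
  rw [integral_mul_const, hone, one_mul]
end

section
/- Let E = ℝ^d, T ≥ 1, β > 0, c₀ > 0. For t = 0, …, T−1 let P_F^t (finetuned) and P_F^{#,t} (pretrained) be strictly positive transition densities E × E → ℝ, let F̃_t : E → ℝ (t = 0, …, T) be strictly positive with F̃_0 ≡ c₀ constant and F̃_T(x) = R(x)^β for a strictly positive R : E → ℝ, and let P_0 be the shared initial probability density. Suppose the residual detailed balance condition F̃_t(x) · (P_F^t(y|x) / P_F^{#,t}(y|x)) = F̃_{t+1}(y) holds for all t and all x, y ∈ E. Then, assuming all iterated integrals exist and are finite, the finetuned marginal P_F(x_T) = ∫ P_0(x_0) ∏_{t=0}^{T−1} P_F^t(x_{t+1}|x_t) dx_{0:T−1} equals (1/c₀) · R(x_T)^β · P_F^#(x_T) for every x_T, where P_F^#(x_T) = ∫ P_0(x_0) ∏_{t=0}^{T−1} P_F^{#,t}(x_{t+1}|x_t)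 dx_{0:T−1}. -/
/-!
Residual detailed balance says that each finetuned transition is the pretrained one times
`F̃_{t+1}(x_{t+1}) / F̃_t(x_t)`. Along a trajectory these ratios telescope
(`prod_succ_div_castSucc`) to `F̃_T(x_T) / F̃_0(x_0) = R(x_T)^β / c₀`. This factor depends only
on the endpoint `x_T`, so it comes out of the integral over `(x_0, …, x_{T-1})`.
-/

open MeasureTheory

/-- Telescoping along a trajectory `g₀, …, g_T` of nonzero reals. -/
theorem prod_succ_div_castSucc {T : ℕ} (g : Fin (T + 1) → ℝ) (hg : ∀ i, g i ≠ 0) :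
    ∏ t : Fin T, (g t.succ / g t.castSucc) = g (Fin.last T) / g 0 := by
  have h : g 0 * ∏ t : Fin T, g t.succ = (∏ t : Fin T, g t.castSucc) * g (Fin.last T) := by
    rw [← Fin.prod_univ_succ, Fin.prod_univ_castSucc]
  have hne : ∏ t : Fin T, g t.castSucc ≠ 0 := Finset.prod_ne_zero_iff.mpr fun t _ => hg _
  rw [Finset.prod_div_distrib, div_eq_div_iff hne (hg 0)]
  linarith

/-- Residual detailed balance implies that the finetuned marginal equals
`(1/c₀) · R^β` times the pretrained marginal.
Conventions: `PF t x y = P_F^t(y|x)` (finetuned), `PFs t x y = P_F^{#,t}(y|x)`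
(pretrained), `Ftil t` the residual flow. -/
theorem residual_DB_marginal {d T : ℕ} (hT : 1 ≤ T) (β c₀ : ℝ) (hβ : 0 < β) (hc₀ : 0 < c₀)
    (PF PFs : Fin T → EuclideanSpace ℝ (Fin d) → EuclideanSpace ℝ (Fin d) → ℝ)
    (Ftil : Fin (T + 1) → EuclideanSpace ℝ (Fin d) → ℝ)
    (R P0 : EuclideanSpace ℝ (Fin d) → ℝ)
    (hPFpos : ∀ t x y, 0 < PF t x y) (hPFspos : ∀ t x y, 0 < PFs t x y)
    (hFtilpos : ∀ t x, 0 < Ftil t x) (hRpos : ∀ x, 0 < R x)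
    (hPFmeas : ∀ t, Measurable (Function.uncurry (PF t)))
    (hPFsmeas : ∀ t, Measurable (Function.uncurry (PFs t)))
    (hP0meas : Measurable P0)
    (hP0nonneg : ∀ x, 0 ≤ P0 x) (hP0norm : ∫ x, P0 x = 1)
    (hFtil0 : ∀ x, Ftil 0 x = c₀)
    (hFtilT : ∀ x, Ftil (Fin.last T) x = R x ^ β)
    (hRDB : ∀ (t : Fin T) (x y : EuclideanSpace ℝ (Fin d)),
      Ftil t.castSucc x * (PF t x y / PFs t x y) = Ftil t.succ y)
    (hInt : ∀ z : EuclideanSpace ℝ (Fin d),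
      Integrable (fun x : Fin T → EuclideanSpace ℝ (Fin d) =>
        P0 (Fin.snoc (α := fun _ => EuclideanSpace ℝ (Fin d)) x z 0) *
          ∏ t : Fin T, PF t (Fin.snoc (α := fun _ => EuclideanSpace ℝ (Fin d)) x z t.castSucc)
            (Fin.snoc (α := fun _ => EuclideanSpace ℝ (Fin d)) x z t.succ)))
    (hInts : ∀ z : EuclideanSpace ℝ (Fin d),
      Integrable (fun x : Fin T → EuclideanSpace ℝ (Fin d) =>
        P0 (Fin.snoc (α := fun _ => EuclideanSpace ℝ (Fin d)) x z 0) *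
          ∏ t : Fin T, PFs t (Fin.snoc (α := fun _ => EuclideanSpace ℝ (Fin d)) x z t.castSucc)
            (Fin.snoc (α := fun _ => EuclideanSpace ℝ (Fin d)) x z t.succ))) :
    ∀ z, forwardMarginal P0 PF z = (1 / c₀) * R z ^ β * forwardMarginal P0 PFs z := by
  intro z
  unfold forwardMarginal
  rw [← integral_const_mul]
  congr 1
  funext x
  set w : Fin (T + 1) → EuclideanSpace ℝ (Fin d) :=
    Fin.snoc (α := fun _ => EuclideanSpace ℝ (Fin d)) x z with hw
  have hlast : w (Fin.last T) = z := by simp [hw]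
  have hstep : ∀ t : Fin T, PF t (w t.castSucc) (w t.succ) =
      Ftil t.succ (w t.succ) / Ftil t.castSucc (w t.castSucc) *
        PFs t (w t.castSucc) (w t.succ) := by
    intro t
    have hF := (hFtilpos t.castSucc (w t.castSucc)).ne'
    have hP := (hPFspos t (w t.castSucc) (w t.succ)).ne'
    rw [← hRDB t (w t.castSucc) (w t.succ)]
    field_simp
  have htel := prod_succ_div_castSucc (fun i => Ftil i (w i)) fun i => (hFtilpos i (w i)).ne'
  simp only [hFtil0, hFtilT, hlast] at htel
  rw [Finset.prod_congr rfl fun t _ => hstep t, Finset.prod_mul_distrib, htel]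
  ring
end
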